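/- For every natural number n and every real number x with |x| < 1, one has −(1/n!) · (d^n/dz^n)(z^n/(z+x)^{n+1}) evaluated at z = −1 equals ∑_{k=0}^{∞} C(n+k, k)^2 · x^k; that is, the n-th iterated derivative at −1 of the real function z ↦ z^n/(z+x)^{n+1}, multiplied by −1/n!, equals the (convergent) sum of the series ∑_{k≥0} C(n+k,k)^2 x^k. -/

import Mathlib

/-!
Expanding `z ^ m = ((z + x) - x) ^ m` writes `z ^ m / (z + x) ^ (m + 1)` as a combination of the
powers `(z + x) ^ (-(j + 1))` with `j ≤ m`. The `n`-th derivatives of these at `z = -1` are, up to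
sign, binomial multiples of `(1 - x) ^ (-(j + n + 1))`, whose power series in `x` are known.
Collecting the coefficient of `x ^ k` leaves the finite sum
`∑ j, C(m, j) * C(j + n, n) * C(k + n, j + n) = C(n + k, k) * ∑ j, C(m, j) * C(k, j)`,
which Vandermonde's identity evaluates.
-/

open Finset
open scoped Nat

theorem sum_range_choose_mul_choose (m k : ℕ) :
    ∑ j ∈ range (m + 1), m.choose j * k.choose j = (m + k).choose k := by
  calc ∑ j ∈ range (m + 1), m.choose j * k.choose j
      = ∑ j ∈ range (m + 1), k.choose j * m.choose (m - j) :=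
        sum_congr rfl fun j hj => by
          rw [Nat.choose_symm (mem_range_succ_iff.mp hj), mul_comm]
    _ = (k + m).choose m := by
        rw [Nat.add_choose_eq, Nat.sum_antidiagonal_eq_sum_range_succ
          (fun i j => k.choose i * m.choose j)]
    _ = (m + k).choose k := by rw [add_comm, Nat.choose_symm_add]

theorem add_choose_right_mul_add_choose_add (n k j : ℕ) :
    (j + n).choose n * (k + n).choose (j + n) = (n + k).choose k * k.choose j := by
  rw [mul_comm, Nat.choose_mul (Nat.le_add_left n j), Nat.add_sub_cancel, Nat.add_sub_cancel,
    add_comm k n, Nat.choose_symm_add]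

theorem sum_range_choose_mul_add_choose_mul_add_choose (m n k : ℕ) :
    ∑ j ∈ range (m + 1), m.choose j * (j + n).choose n * (k + n).choose (j + n) =
      (m + k).choose k * (n + k).choose k := by
  simp_rw [← sum_range_choose_mul_choose m k, sum_mul, mul_assoc,
    add_choose_right_mul_add_choose_add, mul_comm ((n + k).choose k)]

section Series

variable {𝕜 : Type*} [NormedDivisionRing 𝕜] {x : 𝕜}

theorem hasSum_add_choose_add_mul_geometric_of_norm_lt_one (n j : ℕ) (hx : ‖x‖ < 1) :
    HasSum (fun k : ℕ => ((k + n).choose (j + n) : 𝕜) * x ^ k)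
      (x ^ j / (1 - x) ^ (j + n + 1)) := by
  have vanishes_below (k : ℕ) (hk : k ∉ Set.range (· + j)) :
      ((k + n).choose (j + n) : 𝕜) * x ^ k = 0 := by
    have hkj : k < j := by
      by_contra! hjk
      exact hk ⟨k - j, Nat.sub_add_cancel hjk⟩
    rw [Nat.choose_eq_zero_of_lt (by lia), Nat.cast_zero, zero_mul]
  have shifted (k : ℕ) : ((k + j + n).choose (j + n) : 𝕜) * x ^ (k + j) =
      x ^ j * (((k + (j + n)).choose (j + n) : 𝕜) * x ^ k) := by
    rw [(Nat.cast_commute _ _).symm.left_comm, ← pow_add, add_comm j k, add_assoc k j n]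
  rw [← (add_left_injective j).hasSum_iff vanishes_below, ← mul_one_div]
  simpa only [Function.comp_def, shifted] using
    (hasSum_choose_mul_geometric_of_norm_lt_one (j + n) hx).mul_left (x ^ j)

theorem hasSum_add_choose_mul_add_choose_mul_geometric_of_norm_lt_one (m n : ℕ) (hx : ‖x‖ < 1) :
    HasSum (fun k : ℕ => ((m + k).choose k * (n + k).choose k : 𝕜) * x ^ k)
      (∑ j ∈ range (m + 1),
        (m.choose j * (j + n).choose n : 𝕜) * (x ^ j / (1 - x) ^ (j + n + 1))) := by
  have coeff (k : ℕ) : ((m + k).choose k * (n + k).choose k : 𝕜) * x ^ k =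
      ∑ j ∈ range (m + 1), (m.choose j * (j + n).choose n : 𝕜) *
        (((k + n).choose (j + n) : 𝕜) * x ^ k) := by
    simp_rw [← mul_assoc, ← sum_mul]
    exact_mod_cast congrArg (fun c : ℕ => (c : 𝕜) * x ^ k)
      (sum_range_choose_mul_add_choose_mul_add_choose m n k).symm
  simp_rw [coeff]
  exact hasSum_sum fun j _ =>
    (hasSum_add_choose_add_mul_geometric_of_norm_lt_one n j hx).mul_left _

end Series

theorem pow_div_add_pow_succ_eq_sum {K : Type*} [Field K] (m : ℕ) (x z : K) :
    z ^ m / (z + x) ^ (m + 1) =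
      ∑ j ∈ range (m + 1), (m.choose j * (-x) ^ j) * ((z + x) ^ (j + 1))⁻¹ := by
  rcases eq_or_ne (z + x) 0 with hzx | hzx
  · simp [hzx]
  calc z ^ m / (z + x) ^ (m + 1)
      = (-x + (z + x)) ^ m / (z + x) ^ (m + 1) := by rw [neg_add_cancel_comm_assoc]
    _ = ∑ j ∈ range (m + 1), (m.choose j * (-x) ^ j) * ((z + x) ^ (j + 1))⁻¹ := by
        rw [add_pow, sum_div]
        refine sum_congr rfl fun j hj => ?_
        obtain ⟨i, rfl⟩ := Nat.exists_eq_add_of_le (mem_range_succ_iff.mp hj)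
        rw [Nat.add_sub_cancel_left]
        field_simp
        ring

theorem neg_one_pow_mul_neg_pow_div_neg_one_add_pow {K : Type*} [Field K] (n j : ℕ) (x : K) :
    (-1) ^ n * ((-x) ^ j / (-1 + x) ^ (j + n + 1)) = -(x ^ j / (1 - x) ^ (j + n + 1)) := by
  rw [show -1 + x = -(1 - x) by ring, neg_pow x, neg_pow (1 - x), pow_succ (-1 : K), pow_add]
  rcases neg_one_pow_eq_or K n with hn | hn <;> rcases neg_one_pow_eq_or K j with hj | hj <;>
    simp [hn, hj, neg_div, div_neg]

theorem prod_range_neg_succ_sub {R : Type*} [CommRing R] (j n : ℕ) :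
    ∏ i ∈ range n, (-((j : R) + 1) - i) = (-1) ^ n * (n ! * (j + n).choose n) := by
  calc ∏ i ∈ range n, (-((j : R) + 1) - i)
      = ∏ i ∈ range n, -(((j + 1 + i : ℕ) : R)) :=
        prod_congr rfl fun i _ => by push_cast; ring
    _ = (-1) ^ n * ((j + 1).ascFactorial n : ℕ) := by
        rw [prod_neg, card_range, Nat.ascFactorial_eq_prod_range, Nat.cast_prod]
    _ = (-1) ^ n * (n ! * (j + n).choose n) := by
        rw [Nat.ascFactorial_eq_factorial_mul_choose, Nat.cast_mul]

section Derivative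

variable {𝕜 : Type*} [NontriviallyNormedField 𝕜]

theorem iteratedDeriv_inv_pow_succ (n j : ℕ) (z : 𝕜) :
    iteratedDeriv n (fun y : 𝕜 => (y ^ (j + 1))⁻¹) z =
      (-1) ^ n * (n ! * (j + n).choose n) * (z ^ (j + n + 1))⁻¹ := by
  have inv_pow_eq_zpow (i : ℕ) (y : 𝕜) : (y ^ (i + 1))⁻¹ = y ^ (-((i : ℤ) + 1)) := by
    rw [zpow_neg]; norm_cast
  have exponent : -((j : ℤ) + 1) - n = -(((j + n : ℕ) : ℤ) + 1) := by push_cast; ring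
  simp_rw [inv_pow_eq_zpow, iteratedDeriv_eq_iterate, iter_deriv_zpow, exponent,
    ← prod_range_neg_succ_sub]
  norm_cast

theorem iteratedDeriv_pow_div_add_pow_succ (m n : ℕ) {x z : 𝕜} (hzx : z + x ≠ 0) :
    iteratedDeriv n (fun y : 𝕜 => y ^ m / (y + x) ^ (m + 1)) z =
      (-1) ^ n * n ! * ∑ j ∈ range (m + 1),
        (m.choose j * (j + n).choose n : 𝕜) * ((-x) ^ j / (z + x) ^ (j + n + 1)) := by
  have smooth (j : ℕ) : ContDiffAt 𝕜 n (fun y : 𝕜 => ((y + x) ^ (j + 1))⁻¹) z :=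
    ContDiffAt.inv (by fun_prop) (pow_ne_zero _ hzx)
  simp_rw [pow_div_add_pow_succ_eq_sum]
  rw [iteratedDeriv_fun_sum fun j _ => contDiffAt_const.mul (smooth j), mul_sum]
  refine sum_congr rfl fun j _ => ?_
  have shifted : iteratedDeriv n (fun y : 𝕜 => ((y + x) ^ (j + 1))⁻¹) z =
      (-1) ^ n * (n ! * (j + n).choose n) * ((z + x) ^ (j + n + 1))⁻¹ := by
    rw [← iteratedDeriv_inv_pow_succ]
    exact congrFun (iteratedDeriv_comp_add_const n (fun y : 𝕜 => (y ^ (j + 1))⁻¹) x) z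
  rw [iteratedDeriv_const_mul_field, shifted]
  ring

theorem turan_derivative_evaluation_general [CharZero 𝕜] (m n : ℕ) {x : 𝕜} (hx : ‖x‖ < 1) :
    HasSum (fun k : ℕ => ((m + k).choose k * (n + k).choose k : 𝕜) * x ^ k)
      (-(1 / (n ! : 𝕜)) *
        iteratedDeriv n (fun z : 𝕜 => z ^ m / (z + x) ^ (m + 1)) (-1)) := by
  have hx1 : -1 + x ≠ 0 := fun h => by
    obtain rfl : 1 = x := neg_add_eq_zero.mp h
    simp at hx
  have hn : (n ! : 𝕜) ≠ 0 := Nat.cast_ne_zero.mpr n.factorial_ne_zero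
  convert hasSum_add_choose_mul_add_choose_mul_geometric_of_norm_lt_one m n hx using 1
  rw [iteratedDeriv_pow_div_add_pow_succ m n hx1]
  calc -(1 / (n ! : 𝕜)) * ((-1) ^ n * n ! * ∑ j ∈ range (m + 1),
        (m.choose j * (j + n).choose n : 𝕜) * ((-x) ^ j / (-1 + x) ^ (j + n + 1)))
      = -∑ j ∈ range (m + 1), (m.choose j * (j + n).choose n : 𝕜) *
          ((-1) ^ n * ((-x) ^ j / (-1 + x) ^ (j + n + 1))) := by
        simp_rw [mul_left_comm _ ((-1 : 𝕜) ^ n), ← mul_sum]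
        field_simp
    _ = ∑ j ∈ range (m + 1),
          (m.choose j * (j + n).choose n : 𝕜) * (x ^ j / (1 - x) ^ (j + n + 1)) := by
        simp_rw [neg_one_pow_mul_neg_pow_div_neg_one_add_pow, mul_neg, sum_neg_distrib, neg_neg]

end Derivative

theorem turan_derivative_evaluation (n : ℕ) (x : ℝ) (hx : |x| < 1) :
    -(1 / (n.factorial : ℝ)) *
        iteratedDeriv n (fun z : ℝ => z ^ n / (z + x) ^ (n + 1)) (-1) =
      ∑' k : ℕ, ((n + k).choose k : ℝ) ^ 2 * x ^ k := by
  simp_rw [sq]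
  exact (turan_derivative_evaluation_general n n hx).tsum_eq.symm
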